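/- Every semidiscrete solution (p_h, m_h) of the inexact Petrov–Galerkin method satisfies, for all 0 ≤ t ≤ T, the gradient bounds ‖∂_x m_h(t)‖ ≤ ‖π_h^{k−1} f(t)‖ + a‖π_h^{k−1} ∂_t p_h(t)‖ and ‖∂_x p_h(t)‖ ≤ ‖π_h^{k−1} g(t)‖ + b‖π_h^{k−1} ∂_t m_h(t)‖ + d_max‖π_h^{k−1} m_h(t)‖. -/

import Mathlib

/-!
The elementwise derivative of a continuous piecewise polynomial of degree `k` lies in the test
space `P_{k-1}(T_h)`, so `∂_x m_h(t)` and `∂_x p_h(t)` may be used as test functions in the first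
and second equation of the method. Because the test functions are in `P_{k-1}(T_h)`, all
data and time derivatives may be replaced by their projections, and the Cauchy–Schwarz
inequality on piecewise polynomials (`Mesh.PiecewisePoly.integral_abs_mul_le`) gives
`‖∂_x m_h‖² ≤ (‖π f‖ + a ‖π ∂_t p_h‖) ‖∂_x m_h‖`, and similarly for `p_h`; one then divides by
the norm. The friction term is estimated pointwise by `|d| ≤ d_max` almost everywhere.
This needs no measurability of `d`, since a Bochner integral of a non-integrable function is `0`.
-/

open MeasureTheory intervalIntegral Set

noncomputable section

/-- A mesh `x_L = x_0 < x_1 < ⋯ < x_N = x_R` of the interval `[x_L, x_R]`. -/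
structure Mesh (xL xR : ℝ) where
  N : ℕ
  Npos : 0 < N
  pt : ℕ → ℝ
  left : pt 0 = xL
  right : pt N = xR
  mono : ∀ n < N, pt n < pt (n + 1)

namespace Mesh

variable {xL xR : ℝ}

/-- The global mesh size `h = max_n (x_n - x_{n-1})`. -/
def hsize (M : Mesh xL xR) : ℝ :=
  (Finset.range M.N).sup' (Finset.nonempty_range_iff.mpr M.Npos.ne') fun n =>
    M.pt (n + 1) - M.pt n

/-- `v ∈ P_j(T_h)`: on the interior of each element, `v` coincides with a polynomial of
degree at most `j`. -/
def PiecewisePoly (M : Mesh xL xR) (j : ℕ) (v : ℝ → ℝ) : Prop :=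
  ∀ n < M.N, ∃ P : Polynomial ℝ, P.natDegree ≤ j ∧
    ∀ x ∈ Set.Ioo (M.pt n) (M.pt (n + 1)), v x = P.eval x

/-- `dv` is the elementwise derivative `∂_x v` of `v`. -/
def PiecewiseDeriv (M : Mesh xL xR) (v dv : ℝ → ℝ) : Prop :=
  ∀ n < M.N, ∀ x ∈ Set.Ioo (M.pt n) (M.pt (n + 1)), HasDerivAt v (dv x) x

/-- `v` is continuous on `[x_L,x_R]` and piecewise continuously differentiable with
elementwise derivative `dv` (continuous up to the closure of each element). -/
def PiecewiseC1 (M : Mesh xL xR) (v dv : ℝ → ℝ) : Prop :=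
  ContinuousOn v (Set.Icc xL xR) ∧ M.PiecewiseDeriv v dv ∧
    ∀ n < M.N, ∃ w : ℝ → ℝ, ContinuousOn w (Set.Icc (M.pt n) (M.pt (n + 1))) ∧
      Set.EqOn dv w (Set.Ioo (M.pt n) (M.pt (n + 1)))

end Mesh

/-- The `L²(x_L,x_R)` inner product `(v,w) = ∫ v w`. -/
def inner2 (xL xR : ℝ) (v w : ℝ → ℝ) : ℝ := ∫ x in xL..xR, v x * w x

/-- The `L²(x_L,x_R)` norm. -/
def L2norm (xL xR : ℝ) (v : ℝ → ℝ) : ℝ := Real.sqrt (∫ x in xL..xR, v x ^ 2)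

/-- `pw = π_h^j w` is the `L²`-orthogonal projection of `w` onto `P_j(T_h)`. -/
def IsL2Proj {xL xR : ℝ} (M : Mesh xL xR) (j : ℕ) (w pw : ℝ → ℝ) : Prop :=
  M.PiecewisePoly j pw ∧
    ∀ q : ℝ → ℝ, M.PiecewisePoly j q → inner2 xL xR pw q = inner2 xL xR w q

/-- `Iv = I_h^k v` is the interpolant of `v` (with elementwise derivative `dv`):
`Iv` is a continuous piecewise polynomial of degree at most `k` with elementwise
derivative `dIv`, it matches `v` at the mesh points, and `(∂_x Iv, q̃) = (∂_x v, q̃)`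
for all `q̃ ∈ P_{k-1}(T_h)`. -/
def IsInterp {xL xR : ℝ} (M : Mesh xL xR) (k : ℕ) (v dv Iv dIv : ℝ → ℝ) : Prop :=
  M.PiecewisePoly k Iv ∧ ContinuousOn Iv (Set.Icc xL xR) ∧ M.PiecewiseDeriv Iv dIv ∧
    (∀ n ≤ M.N, Iv (M.pt n) = v (M.pt n)) ∧
    ∀ q : ℝ → ℝ, M.PiecewisePoly (k - 1) q → inner2 xL xR dIv q = inner2 xL xR dv q

/-- A semidiscrete solution `(p_h, m_h)` of the inexact Petrov--Galerkin method on `[0,T]`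
for the damped linear wave system with coefficients `a`, `b`, friction `d` and data `f`, `g`.
The fields `dtp`, `dtm` are the time derivatives, `dxp`, `dxm` the elementwise spatial
derivatives, and `pim t = π_h^{k-1} (m_h t)`. -/
structure PGSol {xL xR : ℝ} (M : Mesh xL xR) (k : ℕ) (T a b : ℝ)
    (d : ℝ → ℝ) (f g : ℝ → ℝ → ℝ) where
  p : ℝ → ℝ → ℝ
  m : ℝ → ℝ → ℝ
  dtp : ℝ → ℝ → ℝ
  dtm : ℝ → ℝ → ℝ
  dxp : ℝ → ℝ → ℝ
  dxm : ℝ → ℝ → ℝ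
  pim : ℝ → ℝ → ℝ
  p_poly : ∀ t ∈ Set.Icc (0 : ℝ) T, M.PiecewisePoly k (p t)
  p_cont : ∀ t ∈ Set.Icc (0 : ℝ) T, ContinuousOn (p t) (Set.Icc xL xR)
  p_bcL : ∀ t ∈ Set.Icc (0 : ℝ) T, p t xL = 0
  p_bcR : ∀ t ∈ Set.Icc (0 : ℝ) T, p t xR = 0
  m_poly : ∀ t ∈ Set.Icc (0 : ℝ) T, M.PiecewisePoly k (m t)
  m_cont : ∀ t ∈ Set.Icc (0 : ℝ) T, ContinuousOn (m t) (Set.Icc xL xR)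
  dxp_spec : ∀ t ∈ Set.Icc (0 : ℝ) T, M.PiecewiseDeriv (p t) (dxp t)
  dxm_spec : ∀ t ∈ Set.Icc (0 : ℝ) T, M.PiecewiseDeriv (m t) (dxm t)
  dtp_spec : ∀ t ∈ Set.Icc (0 : ℝ) T, ∀ x,
    HasDerivWithinAt (fun s => p s x) (dtp t x) (Set.Icc (0 : ℝ) T) t
  dtm_spec : ∀ t ∈ Set.Icc (0 : ℝ) T, ∀ x,
    HasDerivWithinAt (fun s => m s x) (dtm t x) (Set.Icc (0 : ℝ) T) t
  dtp_cont : ∀ x, ContinuousOn (fun t => dtp t x) (Set.Icc (0 : ℝ) T)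
  dtm_cont : ∀ x, ContinuousOn (fun t => dtm t x) (Set.Icc (0 : ℝ) T)
  pim_spec : ∀ t ∈ Set.Icc (0 : ℝ) T, IsL2Proj M (k - 1) (m t) (pim t)
  eq1 : ∀ t ∈ Set.Icc (0 : ℝ) T, ∀ q : ℝ → ℝ, M.PiecewisePoly (k - 1) q →
    inner2 xL xR (fun x => a * dtp t x) q + inner2 xL xR (dxm t) q =
      inner2 xL xR (f t) q
  eq2 : ∀ t ∈ Set.Icc (0 : ℝ) T, ∀ v : ℝ → ℝ, M.PiecewisePoly (k - 1) v →
    inner2 xL xR (fun x => b * dtm t x) v + inner2 xL xR (dxp t) v +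
      inner2 xL xR (fun x => d x * pim t x) v = inner2 xL xR (g t) v

namespace Mesh

variable {xL xR : ℝ} {M : Mesh xL xR} {i j : ℕ} {v w : ℝ → ℝ}

lemma PiecewisePoly.mul (hv : M.PiecewisePoly i v) (hw : M.PiecewisePoly j w) :
    M.PiecewisePoly (i + j) (fun x => v x * w x) := by
  intro n hn
  obtain ⟨P, hP, hvP⟩ := hv n hn
  obtain ⟨Q, hQ, hwQ⟩ := hw n hn
  refine ⟨P * Q, Polynomial.natDegree_mul_le.trans (add_le_add hP hQ), fun x hx => ?_⟩
  simp only [Polynomial.eval_mul, hvP x hx, hwQ x hx]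

lemma PiecewisePoly.intervalIntegrable (hv : M.PiecewisePoly j v) :
    IntervalIntegrable v volume xL xR := by
  have h : ∀ n < M.N, IntervalIntegrable v volume (M.pt n) (M.pt (n + 1)) := by
    intro n hn
    obtain ⟨P, -, hvP⟩ := hv n hn
    have hP : IntervalIntegrable (fun x => P.eval x) volume (M.pt n) (M.pt (n + 1)) :=
      P.continuous.intervalIntegrable _ _
    rw [intervalIntegrable_iff_integrableOn_Ioo_of_le (M.mono n hn).le] at hP ⊢
    exact hP.congr_fun (fun x hx => (hvP x hx).symm) measurableSet_Ioo
  have := IntervalIntegrable.trans_iterate h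
  rwa [M.left, M.right] at this

/-- The elementwise derivative of a piecewise polynomial lies in the test space. -/
lemma PiecewisePoly.of_piecewiseDeriv (hv : M.PiecewisePoly j v) (hw : M.PiecewiseDeriv v w) :
    M.PiecewisePoly (j - 1) w := by
  intro n hn
  obtain ⟨P, hP, hvP⟩ := hv n hn
  refine ⟨P.derivative, P.natDegree_derivative_le.trans (Nat.sub_le_sub_right hP 1),
    fun x hx => ?_⟩
  refine (hw n hn x hx).unique ((P.hasDerivAt x).congr_of_eventuallyEq ?_)
  filter_upwards [isOpen_Ioo.mem_nhds hx] with y hy using hvP y hy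

/-- Cauchy–Schwarz for piecewise polynomials, with the absolute value inside the integral,
as needed for the friction term. -/
lemma PiecewisePoly.integral_abs_mul_le (hle : xL ≤ xR)
    (hv : M.PiecewisePoly i v) (hw : M.PiecewisePoly j w) :
    ∫ x in xL..xR, |v x * w x| ≤ L2norm xL xR v * L2norm xL xR w := by
  have hvv : IntervalIntegrable (fun x => v x ^ 2) volume xL xR := by
    simpa only [sq] using (hv.mul hv).intervalIntegrable
  have hww : IntervalIntegrable (fun x => w x ^ 2) volume xL xR := by
    simpa only [sq] using (hw.mul hw).intervalIntegrable
  have hvw : IntervalIntegrable (fun x => |v x * w x|) volume xL xR :=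
    (hv.mul hw).intervalIntegrable.abs
  -- the quadratic `s ↦ ‖|v| - s |w|‖²` is nonnegative, so its discriminant is nonpositive
  have hquad : ∀ s : ℝ, 0 ≤ (∫ x in xL..xR, w x ^ 2) * (s * s) +
      (-2 * ∫ x in xL..xR, |v x * w x|) * s + ∫ x in xL..xR, v x ^ 2 := by
    intro s
    have h0 : 0 ≤ ∫ x in xL..xR, (|v x| - s * |w x|) ^ 2 :=
      intervalIntegral.integral_nonneg hle fun x _ => sq_nonneg _
    have h1 : ∫ x in xL..xR, (|v x| - s * |w x|) ^ 2 =
        ∫ x in xL..xR, (s * s) * w x ^ 2 + (-2 * s) * |v x * w x| + v x ^ 2 := by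
      congr 1 with x
      rw [abs_mul, ← sq_abs (v x), ← sq_abs (w x)]
      ring
    rw [h1, intervalIntegral.integral_add ((hww.const_mul _).add (hvw.const_mul _)) hvv,
      intervalIntegral.integral_add (hww.const_mul _) (hvw.const_mul _),
      intervalIntegral.integral_const_mul, intervalIntegral.integral_const_mul] at h0
    linarith
  have hdisc := discrim_le_zero hquad
  rw [discrim] at hdisc
  rw [L2norm, L2norm,
    ← Real.sqrt_mul (intervalIntegral.integral_nonneg hle fun x _ => sq_nonneg _)]
  exact Real.le_sqrt_of_sq_le (by linarith)

lemma PiecewisePoly.abs_inner2_le (hle : xL ≤ xR)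
    (hv : M.PiecewisePoly i v) (hw : M.PiecewisePoly j w) :
    |inner2 xL xR v w| ≤ L2norm xL xR v * L2norm xL xR w :=
  (intervalIntegral.abs_integral_le_integral_abs hle).trans (hv.integral_abs_mul_le hle hw)

end Mesh

lemma L2norm_nonneg (xL xR : ℝ) (v : ℝ → ℝ) : 0 ≤ L2norm xL xR v := Real.sqrt_nonneg _

lemma inner2_self {xL xR : ℝ} (hle : xL ≤ xR) (v : ℝ → ℝ) :
    inner2 xL xR v v = L2norm xL xR v * L2norm xL xR v := by
  rw [L2norm, Real.mul_self_sqrt (intervalIntegral.integral_nonneg hle fun x _ => sq_nonneg _)]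
  simp only [inner2, sq]

lemma inner2_const_mul_left (xL xR c : ℝ) (v w : ℝ → ℝ) :
    inner2 xL xR (fun x => c * v x) w = c * inner2 xL xR v w := by
  simp only [inner2, mul_assoc, intervalIntegral.integral_const_mul]

lemma le_of_mul_self_le_mul {x y : ℝ} (hx : 0 ≤ x) (hy : 0 ≤ y) (h : x * x ≤ y * x) : x ≤ y := by
  rcases hx.eq_or_lt with rfl | hx
  · exact hy
  · exact le_of_mul_le_mul_right h hx

/-- Projections are determined only up to the values at the mesh points, so two of them are
compared through their norms. -/
lemma IsL2Proj.L2norm_le {xL xR : ℝ} {M : Mesh xL xR} {j : ℕ} {w pw qw : ℝ → ℝ}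
    (hle : xL ≤ xR) (hp : IsL2Proj M j w pw) (hq : IsL2Proj M j w qw) :
    L2norm xL xR pw ≤ L2norm xL xR qw := by
  refine le_of_mul_self_le_mul (L2norm_nonneg _ _ _) (L2norm_nonneg _ _ _) ?_
  rw [← inner2_self hle, hp.2 pw hp.1, ← hq.2 pw hp.1]
  exact (le_abs_self _).trans (hq.1.abs_inner2_le hle hp.1)

/-- The weight `d` is not assumed measurable: if the left integrand fails to be integrable, its
integral is `0` and the bound is trivial. -/
lemma abs_inner2_weight_le {xL xR : ℝ} {M : Mesh xL xR} {i j : ℕ} {v w d : ℝ → ℝ} {D : ℝ}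
    (hle : xL ≤ xR) (hD : 0 ≤ D)
    (hd : ∀ᵐ x ∂(volume.restrict (Set.Ioo xL xR)), |d x| ≤ D)
    (hv : M.PiecewisePoly i v) (hw : M.PiecewisePoly j w) :
    |inner2 xL xR (fun x => d x * v x) w| ≤ D * (L2norm xL xR v * L2norm xL xR w) := by
  have hint : IntervalIntegrable (fun x => D * |v x * w x|) volume xL xR :=
    (hv.mul hw).intervalIntegrable.abs.const_mul D
  have hbound : ∀ᵐ x ∂volume, x ∈ Set.Ioc xL xR → ‖d x * v x * w x‖ ≤ D * |v x * w x| := by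
    rw [← ae_restrict_iff' measurableSet_Ioc, ← restrict_Ioo_eq_restrict_Ioc]
    filter_upwards [hd] with x hx
    rw [Real.norm_eq_abs, mul_assoc, abs_mul]
    exact mul_le_mul_of_nonneg_right hx (abs_nonneg _)
  have h := intervalIntegral.norm_integral_le_of_norm_le hle hbound hint
  rw [intervalIntegral.integral_const_mul] at h
  exact h.trans (mul_le_mul_of_nonneg_left (hv.integral_abs_mul_le hle hw) hD)

/-- **Gradient bounds.** Every semidiscrete solution `(p_h, m_h)` of the inexact
Petrov--Galerkin method satisfies, for all `0 ≤ t ≤ T`,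
`‖∂_x m_h(t)‖ ≤ ‖π f(t)‖ + a ‖π ∂_t p_h(t)‖` and
`‖∂_x p_h(t)‖ ≤ ‖π g(t)‖ + b ‖π ∂_t m_h(t)‖ + d_max ‖π m_h(t)‖`, with `π = π_h^{k-1}`. -/
theorem gradient_bounds
    (xL xR : ℝ) (hxLR : xL < xR) (k : ℕ) (hk : 1 ≤ k) (M : Mesh xL xR)
    (T a b : ℝ) (d : ℝ → ℝ) (d_min d_max : ℝ) (f g : ℝ → ℝ → ℝ)
    (hT : 0 < T) (ha : 0 < a) (hb : 0 < b) (hdmin : 0 < d_min)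
    (hd : ∀ᵐ x ∂(volume.restrict (Set.Ioo xL xR)), d_min ≤ d x ∧ d x ≤ d_max)
    (hf : ∀ x, ContinuousOn (fun t => f t x) (Set.Icc (0 : ℝ) T))
    (hg : ∀ x, ContinuousOn (fun t => g t x) (Set.Icc (0 : ℝ) T))
    (sol : PGSol M k T a b d f g)
    (Pm Ptp Ptm Pf Pg : ℝ → ℝ → ℝ)
    (hPm : ∀ t ∈ Set.Icc (0 : ℝ) T, IsL2Proj M (k - 1) (sol.m t) (Pm t))
    (hPtp : ∀ t ∈ Set.Icc (0 : ℝ) T, IsL2Proj M (k - 1) (sol.dtp t) (Ptp t))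
    (hPtm : ∀ t ∈ Set.Icc (0 : ℝ) T, IsL2Proj M (k - 1) (sol.dtm t) (Ptm t))
    (hPf : ∀ t ∈ Set.Icc (0 : ℝ) T, IsL2Proj M (k - 1) (f t) (Pf t))
    (hPg : ∀ t ∈ Set.Icc (0 : ℝ) T, IsL2Proj M (k - 1) (g t) (Pg t)) :
    ∀ t ∈ Set.Icc (0 : ℝ) T,
      L2norm xL xR (sol.dxm t) ≤ L2norm xL xR (Pf t) + a * L2norm xL xR (Ptp t) ∧
      L2norm xL xR (sol.dxp t) ≤
        L2norm xL xR (Pg t) + b * L2norm xL xR (Ptm t) + d_max * L2norm xL xR (Pm t) := by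
  intro t ht
  have hle := hxLR.le
  constructor
  · have hq := (sol.m_poly t ht).of_piecewiseDeriv (sol.dxm_spec t ht)
    have heq := sol.eq1 t ht _ hq
    rw [inner2_const_mul_left, ← (hPtp t ht).2 _ hq, ← (hPf t ht).2 _ hq, inner2_self hle] at heq
    have h1 := (abs_le.1 ((hPf t ht).1.abs_inner2_le hle hq)).2
    have h2 := (abs_le.1 ((hPtp t ht).1.abs_inner2_le hle hq)).1
    have h3 := mul_le_mul_of_nonneg_left h2 ha.le
    refine le_of_mul_self_le_mul (L2norm_nonneg _ _ _) ?_ (by linarith)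
    exact add_nonneg (L2norm_nonneg _ _ _) (mul_nonneg ha.le (L2norm_nonneg _ _ _))
  · have hdabs : ∀ᵐ x ∂(volume.restrict (Set.Ioo xL xR)), |d x| ≤ d_max := by
      filter_upwards [hd] with x hx
      exact abs_le.2 ⟨by linarith, hx.2⟩
    have hD : 0 ≤ d_max := by
      -- the almost-everywhere bound holds at some point, as the interval has positive measure
      have : (ae (volume.restrict (Set.Ioo xL xR))).NeBot := by
        rw [ae_neBot, Ne, Measure.restrict_eq_zero, Real.volume_Ioo, ENNReal.ofReal_eq_zero]
        linarith
      obtain ⟨x, hx⟩ := hdabs.exists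
      exact (abs_nonneg _).trans hx
    have hq := (sol.p_poly t ht).of_piecewiseDeriv (sol.dxp_spec t ht)
    have heq := sol.eq2 t ht _ hq
    rw [inner2_const_mul_left, ← (hPtm t ht).2 _ hq, ← (hPg t ht).2 _ hq, inner2_self hle] at heq
    have h1 := (abs_le.1 ((hPg t ht).1.abs_inner2_le hle hq)).2
    have h2 := (abs_le.1 ((hPtm t ht).1.abs_inner2_le hle hq)).1
    have h3 := mul_le_mul_of_nonneg_left h2 hb.le
    have h4 := (abs_le.1 (abs_inner2_weight_le hle hD hdabs (sol.pim_spec t ht).1 hq)).1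
    have h5 := mul_le_mul_of_nonneg_left
      (mul_le_mul_of_nonneg_right ((sol.pim_spec t ht).L2norm_le hle (hPm t ht))
        (L2norm_nonneg xL xR (sol.dxp t))) hD
    refine le_of_mul_self_le_mul (L2norm_nonneg _ _ _) ?_ (by linarith)
    exact add_nonneg (add_nonneg (L2norm_nonneg _ _ _) (mul_nonneg hb.le (L2norm_nonneg _ _ _)))
      (mul_nonneg hD (L2norm_nonneg _ _ _))
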